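/- The ordered Ramsey number of the 3-pan graph with ordering B (vertex set {1,2,3,4}, edge set {{2,3},{2,4},{3,4},{1,3}}, i.e., a triangle on {2,3,4} with a pendant edge from vertex 1 to vertex 3) is at most 14: every 2-coloring of the edges of the complete graph on {1,...,14} contains a monochromatic ordered copy of this graph. -/

import Mathlib

/-- A 2-coloring `c` of the edges of the complete graph on the ordered vertex set
`{1,…,N}` contains an ordered copy, in color `b`, of the ordered graph with vertex
set `{1,…,n}` and edge set `E` (edges listed as pairs `(i, j)` with `i < j`):
there is a strictly increasing map `φ : {1,…,n} → {1,…,N}` such that every edge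
`(i, j) ∈ E` has `(φ i, φ j)` colored `b`. -/
def ContainsOrderedCopy (n N : ℕ) (E : Finset (ℕ × ℕ)) (c : ℕ → ℕ → Bool) (b : Bool) :
    Prop :=
  ∃ φ : ℕ → ℕ,
    (∀ i, 1 ≤ i → i ≤ n → 1 ≤ φ i ∧ φ i ≤ N) ∧
    (∀ i j, 1 ≤ i → i < j → j ≤ n → φ i < φ j) ∧
    (∀ e ∈ E, c (φ e.1) (φ e.2) = b)

/-- A 2-coloring `c` of the edges of the complete graph on `{1,…,N}` contains a
monochromatic ordered copy of the ordered graph with vertex set `{1,…,n}` and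
edge set `E`. -/
def ContainsMonoOrderedCopy (n N : ℕ) (E : Finset (ℕ × ℕ)) (c : ℕ → ℕ → Bool) : Prop :=
  ∃ b : Bool, ContainsOrderedCopy n N E c b

/-- Four suitable vertices give an ordered copy. -/
lemma copy_of_four (c : ℕ → ℕ → Bool) (s : Bool) (w x y z : ℕ) (h0 : 1 ≤ w) (h1 : w < x)
    (h2 : x < y) (h3 : y < z) (h4 : z ≤ 14) (e1 : c w y = s) (e2 : c x y = s)
    (e3 : c x z = s) (e4 : c y z = s) :
    ContainsMonoOrderedCopy 4 14 {(1, 3), (2, 3), (2, 4), (3, 4)} c := by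
  refine ⟨s, fun i => if i = 1 then w else if i = 2 then x else if i = 3 then y else z, ?_, ?_, ?_⟩
  · intro i _ _
    dsimp only
    split_ifs <;> omega
  · intro i j _ _ _
    dsimp only
    split_ifs <;> omega
  · intro e he
    simp only [Finset.mem_insert, Finset.mem_singleton] at he
    rcases he with rfl | rfl | rfl | rfl <;> simp [e1, e2, e3, e4]

/-- A relation in which each element has at most one back-neighbour is bipartite. -/
lemma two_color (P : ℕ → ℕ → Prop) (S : Finset ℕ) :
    (∀ a ∈ S, ∀ b ∈ S, ∀ d ∈ S, a < b → b < d → P a d → P b d → False) →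
    ∃ f : ℕ → Bool, ∀ a ∈ S, ∀ b ∈ S, a < b → P a b → f a ≠ f b := by
  induction S using Finset.induction_on_max with
  | empty => intro _; exact ⟨fun _ => true, by simp⟩
  | insert m S hm ih =>
    intro h
    obtain ⟨f, hf⟩ := ih (fun a ha b hb d hd => h a (Finset.mem_insert_of_mem ha) b
      (Finset.mem_insert_of_mem hb) d (Finset.mem_insert_of_mem hd))
    have key : ∃ v : Bool, ∀ a ∈ S, P a m → f a ≠ v := by
      by_cases hp : ∃ a ∈ S, P a m
      · obtain ⟨p, hpS, hpm⟩ := hp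
        refine ⟨!f p, fun a ha hP => ?_⟩
        have : a = p := by
          by_contra hne
          rcases lt_or_gt_of_ne hne with hl | hl
          · exact h a (by simp [ha]) p (by simp [hpS]) m (by simp) hl (hm p hpS) hP hpm
          · exact h p (by simp [hpS]) a (by simp [ha]) m (by simp) hl (hm a ha) hpm hP
        subst this
        simp
      · exact ⟨true, fun a ha hP => (hp ⟨a, ha, hP⟩).elim⟩
    obtain ⟨v, hv⟩ := key
    refine ⟨fun i => if i = m then v else f i, fun a ha b hb hab hP => ?_⟩
    rw [Finset.mem_insert] at ha hb
    rcases ha with rfl | ha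
    · rcases hb with rfl | hb
      · omega
      · have := hm b hb; omega
    · have ham := hm a ha
      rcases hb with rfl | hb
      · simpa [ham.ne] using hv a ha hP
      · have hbm := hm b hb
        simpa [ham.ne, hbm.ne] using hf a ha b hb hab hP

lemma bool_split (S : Finset ℕ) (f : ℕ → Bool) (k : ℕ) (h : 2 * k + 1 ≤ S.card) :
    ∃ s, k + 1 ≤ (S.filter (fun i => f i = s)).card := by
  have := Finset.card_filter_add_card_filter_not (s := S) (fun i => f i = true)
  simp only [Bool.not_eq_true] at this
  by_cases h1 : k + 1 ≤ (S.filter (fun i => f i = true)).card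
  · exact ⟨_, h1⟩
  · exact ⟨false, by omega⟩

/-- Every 2-coloring of the edges of the complete graph on `{1,…,14}` contains a
monochromatic ordered copy of the 3-pan with ordering `B` (a triangle on
`{2,3,4}` with pendant edge `(1, 3)`), i.e. `r_<(3-pan) ≤ 14` for this ordering. -/
theorem orderedRamsey_pan_B_le :
    ∀ c : ℕ → ℕ → Bool,
      ContainsMonoOrderedCopy 4 14 {(1, 3), (2, 3), (2, 4), (3, 4)} c := by
  intro c
  by_contra hc
  obtain ⟨s, hs⟩ := bool_split (Finset.Icc 1 13) (fun i => c i 14) 6 (by simp)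
  obtain ⟨f, hf⟩ := two_color (fun a b => c a b = s)
    ((Finset.Icc 1 13).filter (fun i => c i 14 = s)) (by
      intro a ha b hb d hd hab hbd h1 h2
      simp only [Finset.mem_filter, Finset.mem_Icc] at ha hb hd
      exact hc (copy_of_four c s a b d 14 ha.1.1 hab hbd (by omega) le_rfl h1 h2 hb.2 hd.2))
  obtain ⟨t, ht⟩ := bool_split _ f 3 hs
  obtain ⟨U, hU, hU4⟩ := Finset.exists_subset_card_eq ht
  let g := U.orderEmbOfFin hU4
  have hg : ∀ i, 1 ≤ g i ∧ g i ≤ 13 := by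
    intro i
    have := hU (U.orderEmbOfFin_mem hU4 i)
    simp only [Finset.mem_filter, Finset.mem_Icc] at this
    exact this.1.1
  have hlt : ∀ i j, i < j → g i < g j := fun i j h => g.strictMono h
  have he : ∀ i j, i < j → c (g i) (g j) = !s := by
    intro i j hij
    have h1 := Finset.mem_filter.1 (hU (U.orderEmbOfFin_mem hU4 i))
    have h2 := Finset.mem_filter.1 (hU (U.orderEmbOfFin_mem hU4 j))
    have h3 := hf _ h1.1 _ h2.1 (hlt i j hij)
    rw [h1.2, h2.2] at h3
    have h4 : c (g i) (g j) ≠ s := fun h => h3 h rfl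
    cases s <;> simpa using h4
  exact hc (copy_of_four c (!s) (g 0) (g 1) (g 2) (g 3) (hg 0).1 (hlt _ _ (by decide))
    (hlt _ _ (by decide)) (hlt _ _ (by decide)) (by have := (hg 3).2; omega)
    (he _ _ (by decide)) (he _ _ (by decide)) (he _ _ (by decide)) (he _ _ (by decide)))
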